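/- Let A be a 2m×2m invertible antisymmetric matrix over a field (or over ℝ), and let L ⊆ {1,…,2m} be a subset of even cardinality. Let Â_L be the submatrix of A obtained by deleting the rows and columns indexed by L, and let A_L^{-1} be the submatrix of A^{-1} consisting of the rows and columns indexed by L. Then (−1)^{S(L)} · Pf(Â_L) = Pf(A) · Pf(A_L^{-1}), where S(L) = Σ_{ℓ∈L} ℓ, with the convention Pf of the empty matrix equals 1. -/

import Mathlib

/-- The Pfaffian of a `2n × 2n` real matrix, defined by the sum-over-permutations
formula `Pf(A) = (1/(2^n n!)) ∑_σ sgn(σ) ∏_i A(σ(2i), σ(2i+1))`. -/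
noncomputable def pfaffian {n : ℕ} (A : Matrix (Fin (2 * n)) (Fin (2 * n)) ℝ) : ℝ :=
  (1 / ((2 : ℝ) ^ n * n.factorial)) *
    ∑ σ : Equiv.Perm (Fin (2 * n)), (Equiv.Perm.sign σ : ℝ) *
      ∏ i : Fin n, A (σ ⟨2 * i.val, by have := i.isLt; omega⟩)
        (σ ⟨2 * i.val + 1, by have := i.isLt; omega⟩)

open Matrix Equiv

set_option linter.unusedSectionVars false

section PairIndexed

/-- The block diagonal matrix with blocks `P` and `R`, indexed by pairs. -/
def pairBlockDiag {α β : Type*} (P : Matrix (α × Fin 2) (α × Fin 2) ℝ)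
    (R : Matrix (β × Fin 2) (β × Fin 2) ℝ) :
    Matrix ((α ⊕ β) × Fin 2) ((α ⊕ β) × Fin 2) ℝ :=
  (fromBlocks P 0 0 R).submatrix (sumProdDistrib α β (Fin 2)) (sumProdDistrib α β (Fin 2))

theorem pairBlockDiag_apply_eq_zero {α β : Type*} (P : Matrix (α × Fin 2) (α × Fin 2) ℝ)
    (R : Matrix (β × Fin 2) (β × Fin 2) ℝ) {x y : (α ⊕ β) × Fin 2}
    (h : x.1.isLeft ≠ y.1.isLeft) : pairBlockDiag P R x y = 0 := by
  obtain ⟨x | x, b⟩ := x <;> obtain ⟨y | y, c⟩ := y <;> simp_all [pairBlockDiag]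

variable {κ μ α β : Type*} [Fintype κ] [DecidableEq κ] [Fintype μ] [DecidableEq μ]
  [Fintype α] [DecidableEq α] [Fintype β] [DecidableEq β]

/-- The unnormalized Pfaffian of a matrix whose indices come in labelled pairs. -/
def pfaffianSum (A : Matrix (κ × Fin 2) (κ × Fin 2) ℝ) : ℝ :=
  ∑ σ : Perm (κ × Fin 2), (Perm.sign σ : ℝ) * ∏ i, A (σ (i, 0)) (σ (i, 1))

/-- The Pfaffian of a matrix whose indices come in labelled pairs. The pairs themselves need not
be ordered, since permuting them is an even permutation of the indices. -/
noncomputable def pairPfaffian (A : Matrix (κ × Fin 2) (κ × Fin 2) ℝ) : ℝ :=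
  pfaffianSum A / (2 ^ Fintype.card κ * (Fintype.card κ).factorial)

/-- The multilinear map `v ↦ ∏ i, v (i, 0) ⬝ A v (i, 1)`. -/
def pairFormProd (A : Matrix (κ × Fin 2) (κ × Fin 2) ℝ) :
    MultilinearMap ℝ (fun _ : κ × Fin 2 => κ × Fin 2 → ℝ) ℝ :=
  MultilinearMap.mk' (fun v => ∏ i, v (i, 0) ⬝ᵥ A *ᵥ v (i, 1))
    (by
      rintro v ⟨i, b⟩ x y
      simp only [← Finset.mul_prod_erase _ _ (Finset.mem_univ i)]
      have h : ∀ z, ∏ j ∈ Finset.univ.erase i, Function.update v (i, b) z (j, 0) ⬝ᵥ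
          A *ᵥ Function.update v (i, b) z (j, 1) =
          ∏ j ∈ Finset.univ.erase i, v (j, 0) ⬝ᵥ A *ᵥ v (j, 1) := fun z =>
        Finset.prod_congr rfl fun j hj => by simp [Function.update, (Finset.ne_of_mem_erase hj)]
      simp only [h, ← add_mul]
      fin_cases b <;> simp [Function.update, mulVec_add])
    (by
      rintro v ⟨i, b⟩ c x
      simp only [← Finset.mul_prod_erase _ _ (Finset.mem_univ i)]
      have h : ∀ z, ∏ j ∈ Finset.univ.erase i, Function.update v (i, b) z (j, 0) ⬝ᵥ
          A *ᵥ Function.update v (i, b) z (j, 1) =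
          ∏ j ∈ Finset.univ.erase i, v (j, 0) ⬝ᵥ A *ᵥ v (j, 1) := fun z =>
        Finset.prod_congr rfl fun j hj => by simp [Function.update, (Finset.ne_of_mem_erase hj)]
      simp only [h]
      fin_cases b <;> simp [Function.update, mulVec_smul, mul_assoc])

theorem alternatization_pairFormProd (A : Matrix (κ × Fin 2) (κ × Fin 2) ℝ)
    (v : κ × Fin 2 → κ × Fin 2 → ℝ) :
    MultilinearMap.alternatization (pairFormProd A) v =
      pfaffianSum (Matrix.of v * A * (Matrix.of v)ᵀ) := by
  rw [MultilinearMap.alternatization_apply]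
  refine Finset.sum_congr rfl fun σ _ => ?_
  simp only [MultilinearMap.domDomCongr_apply, pairFormProd, MultilinearMap.mk'_apply,
    Units.smul_def, zsmul_eq_mul]
  congr 1
  refine Finset.prod_congr rfl fun i _ => ?_
  rw [dotProduct_mulVec]
  rfl

theorem pfaffianSum_congruence (A B : Matrix (κ × Fin 2) (κ × Fin 2) ℝ) :
    pfaffianSum (B * A * Bᵀ) = B.det * pfaffianSum A := by
  have h := DFunLike.congr_fun (AlternatingMap.eq_smul_basis_det (Pi.basisFun ℝ (κ × Fin 2))
    (MultilinearMap.alternatization (pairFormProd A))) (fun i j => B i j)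
  have h1 : Matrix.of (Pi.basisFun ℝ (κ × Fin 2)) = 1 := by
    ext i j
    simp [Matrix.one_apply, Pi.single_apply, eq_comm]
  rw [AlternatingMap.smul_apply, alternatization_pairFormProd, alternatization_pairFormProd, h1,
    Pi.basisFun_det] at h
  rw [Matrix.one_mul, transpose_one, Matrix.mul_one] at h
  rw [mul_comm]
  exact h

theorem pairPfaffian_congruence (A B : Matrix (κ × Fin 2) (κ × Fin 2) ℝ) :
    pairPfaffian (B * A * Bᵀ) = B.det * pairPfaffian A := by
  rw [pairPfaffian, pfaffianSum_congruence, pairPfaffian, mul_div_assoc]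

theorem pairPfaffian_submatrix_perm (A : Matrix (κ × Fin 2) (κ × Fin 2) ℝ)
    (π : Perm (κ × Fin 2)) :
    pairPfaffian (A.submatrix π π) = Perm.sign π * pairPfaffian A := by
  rw [← det_permutation, ← pairPfaffian_congruence]
  congr 1
  ext i j
  simp [Matrix.mul_apply, PEquiv.toMatrix_apply, Equiv.symm_apply_eq]

/-- Reindexing the pairs does not change the Pfaffian. -/
theorem pfaffianSum_reindex (e : κ ≃ μ) (A : Matrix (μ × Fin 2) (μ × Fin 2) ℝ) :
    pfaffianSum (A.submatrix (e.prodCongr (.refl _)) (e.prodCongr (.refl _))) =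
      pfaffianSum A := by
  refine Fintype.sum_equiv (e.prodCongr (.refl _)).permCongr _ _ fun σ => ?_
  rw [Perm.sign_permCongr]
  congr 1
  refine Fintype.prod_equiv e _ _ fun i => ?_
  simp [permCongr_apply]

theorem pairPfaffian_reindex (e : κ ≃ μ) (A : Matrix (μ × Fin 2) (μ × Fin 2) ℝ) :
    pairPfaffian (A.submatrix (e.prodCongr (.refl _)) (e.prodCongr (.refl _))) =
      pairPfaffian A := by
  rw [pairPfaffian, pfaffianSum_reindex, pairPfaffian, Fintype.card_congr e]

theorem pairPfaffian_neg (A : Matrix (κ × Fin 2) (κ × Fin 2) ℝ) :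
    pairPfaffian (-A) = (-1) ^ Fintype.card κ * pairPfaffian A := by
  rw [pairPfaffian, pairPfaffian, ← mul_div_assoc]
  congr 1
  simp only [pfaffianSum, Matrix.neg_apply, Finset.prod_neg, Finset.mul_sum, Finset.card_univ]
  exact Finset.sum_congr rfl fun σ _ => by ring

theorem sign_prodCongr_refl (τ : Perm κ) :
    Perm.sign (τ.prodCongr (Equiv.refl (Fin 2))) = 1 := by
  have : τ.prodCongr (Equiv.refl (Fin 2)) = prodCongrLeft fun _ => τ := by
    ext x <;> rfl
  rw [this, Perm.sign_prodCongrLeft]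
  simp [Int.units_sq]

/-- The pairs that `σ` sends to the first block. -/
def leftPairs (σ : Perm ((α ⊕ β) × Fin 2)) : Finset (α ⊕ β) :=
  Finset.univ.filter fun i => (σ (i, 0)).1.isLeft

/-- The terms of the unnormalized Pfaffian of a block diagonal matrix for which a prescribed set
of pairs is sent to the first block. -/
def blockTerms (P : Matrix (α × Fin 2) (α × Fin 2) ℝ)
    (R : Matrix (β × Fin 2) (β × Fin 2) ℝ) (S : Finset (α ⊕ β)) : ℝ :=
  ∑ σ : Perm ((α ⊕ β) × Fin 2) with leftPairs σ = S,
    (Perm.sign σ : ℝ) * ∏ i, pairBlockDiag P R (σ (i, 0)) (σ (i, 1))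

theorem isLeft_iff_mem_leftPairs {P : Matrix (α × Fin 2) (α × Fin 2) ℝ}
    {R : Matrix (β × Fin 2) (β × Fin 2) ℝ} {σ : Perm ((α ⊕ β) × Fin 2)}
    (h : ∏ i, pairBlockDiag P R (σ (i, 0)) (σ (i, 1)) ≠ 0) (x : (α ⊕ β) × Fin 2) :
    (σ x).1.isLeft ↔ x.1 ∈ leftPairs σ := by
  obtain ⟨i, b⟩ := x
  have hi : (σ (i, 0)).1.isLeft = (σ (i, 1)).1.isLeft := by
    by_contra hne
    exact h (Finset.prod_eq_zero (Finset.mem_univ i) (pairBlockDiag_apply_eq_zero P R hne))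
  fin_cases b <;> simp [leftPairs, hi]

theorem blockTerms_eq_zero (P : Matrix (α × Fin 2) (α × Fin 2) ℝ)
    (R : Matrix (β × Fin 2) (β × Fin 2) ℝ) {S : Finset (α ⊕ β)}
    (hS : S.card ≠ Fintype.card α) : blockTerms P R S = 0 := by
  refine Finset.sum_eq_zero fun σ hσ => ?_
  obtain rfl := (Finset.mem_filter.1 hσ).2
  by_contra h
  have hx := isLeft_iff_mem_leftPairs (right_ne_zero_of_mul h)
  have h1 : Fintype.card {x // (σ x).1.isLeft = true} =
      Fintype.card {y : (α ⊕ β) × Fin 2 // y.1.isLeft = true} :=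
    Fintype.card_congr (σ.subtypeEquiv fun _ => Iff.rfl)
  have h2 : (Finset.univ.filter fun x => (σ x).1.isLeft = true) =
      leftPairs σ ×ˢ Finset.univ := by
    ext x
    simp [hx]
  have h3 : (Finset.univ.filter fun y : (α ⊕ β) × Fin 2 => y.1.isLeft = true) =
      (Finset.univ.map Function.Embedding.inl) ×ˢ Finset.univ := by
    ext ⟨y | y, c⟩ <;> simp
  rw [Fintype.card_subtype, Fintype.card_subtype, h2, h3] at h1
  simp only [Finset.card_product, Finset.card_map, Finset.card_univ, Fintype.card_fin] at h1
  omega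

theorem exists_perm_mem_iff_isLeft {S : Finset (α ⊕ β)} (hS : S.card = Fintype.card α) :
    ∃ τ : Perm (α ⊕ β), ∀ i, τ i ∈ S ↔ i.isLeft := by
  have hcard : Fintype.card {i : α ⊕ β // i.isLeft = true} = Fintype.card {i // i ∈ S} := by
    have : (Finset.univ.filter fun y : α ⊕ β => y.isLeft = true) =
        Finset.univ.map Function.Embedding.inl := by
      ext (y | y) <;> simp
    rw [Fintype.card_subtype, this]
    simp [hS]
  let e := Fintype.equivOfCardEq hcard
  refine ⟨e.extendSubtype, fun i => ⟨fun h => ?_, fun h => e.extendSubtype_mem i h⟩⟩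
  by_contra hi
  exact e.extendSubtype_not_mem i hi h

theorem blockTerms_eq_of_card (P : Matrix (α × Fin 2) (α × Fin 2) ℝ)
    (R : Matrix (β × Fin 2) (β × Fin 2) ℝ) {S : Finset (α ⊕ β)}
    (hS : S.card = Fintype.card α) :
    blockTerms P R S = blockTerms P R (Finset.univ.filter fun i => i.isLeft) := by
  obtain ⟨τ, hτ⟩ := exists_perm_mem_iff_isLeft hS
  let T : Perm ((α ⊕ β) × Fin 2) := τ.prodCongr (Equiv.refl (Fin 2))
  refine Finset.sum_equiv (Equiv.mulRight T) (fun σ => ?_) fun σ _ => ?_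
  · simp only [Finset.mem_filter, Finset.mem_univ, true_and, Finset.ext_iff, leftPairs,
      Equiv.coe_mulRight, Perm.mul_apply]
    rw [τ.forall_congr_right.symm]
    simp [T, hτ]
  · rw [Equiv.coe_mulRight, Perm.sign_mul, sign_prodCongr_refl, mul_one]
    congr 1
    exact (Fintype.prod_equiv τ _ _ fun i => by simp [T]).symm

theorem blockTerms_isLeft (P : Matrix (α × Fin 2) (α × Fin 2) ℝ)
    (R : Matrix (β × Fin 2) (β × Fin 2) ℝ) :
    blockTerms P R (Finset.univ.filter fun i => i.isLeft) = pfaffianSum P * pfaffianSum R := by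
  simp only [pfaffianSum, Finset.sum_mul_sum, ← Finset.sum_product', Finset.univ_product_univ]
  let D := sumProdDistrib α β (Fin 2)
  have hD : ∀ (p : Perm (α × Fin 2) × Perm (β × Fin 2)) x,
      D.symm.permCongr (Perm.sumCongr p.1 p.2) x = D.symm (Perm.sumCongr p.1 p.2 (D x)) :=
    fun p x => rfl
  symm
  refine Finset.sum_of_injOn (fun p => D.symm.permCongr (Perm.sumCongr p.1 p.2)) ?_ ?_ ?_ ?_
  · intro p _ q _ h
    exact Perm.sumCongrHom_injective (D.symm.permCongr.injective h)
  · intro p _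
    refine Finset.mem_coe.2 (Finset.mem_filter.2 ⟨Finset.mem_univ _, ?_⟩)
    simp only [leftPairs, hD]
    ext (i | i) <;> simp [D]
  · intro σ hσ hnot
    by_contra h
    have hx := isLeft_iff_mem_leftPairs (right_ne_zero_of_mul h)
    rw [(Finset.mem_filter.1 hσ).2] at hx
    obtain ⟨p, hp⟩ := Perm.mem_sumCongrHom_range_of_perm_mapsTo_inl
      (σ := D.permCongr σ) (by
        rintro _ ⟨⟨a, b⟩, rfl⟩
        have := (hx (Sum.inl a, b)).2 (by simp)
        rcases hy : σ (Sum.inl a, b) with ⟨y | y, c⟩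
        · exact ⟨(y, c), by simp [D, hy]⟩
        · simp [hy] at this)
    refine hnot ⟨p, Finset.mem_coe.2 (Finset.mem_univ _), ?_⟩
    change D.symm.permCongr (Perm.sumCongrHom _ _ p) = σ
    rw [hp]
    ext x <;> simp
  · intro p _
    rw [Perm.sign_permCongr, Perm.sign_sumCongr, Fintype.prod_sum_type]
    simp only [hD, pairBlockDiag]
    simp [D]
    ring

theorem pairPfaffian_pairBlockDiag (P : Matrix (α × Fin 2) (α × Fin 2) ℝ)
    (R : Matrix (β × Fin 2) (β × Fin 2) ℝ) :
    pairPfaffian (pairBlockDiag P R) = pairPfaffian P * pairPfaffian R := by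
  have h : pfaffianSum (pairBlockDiag P R) =
      (Fintype.card α + Fintype.card β).choose (Fintype.card α) *
        (pfaffianSum P * pfaffianSum R) := by
    rw [pfaffianSum, ← Finset.sum_fiberwise _ leftPairs]
    change ∑ S, blockTerms P R S = _
    rw [← Finset.sum_subset (Finset.subset_univ (Finset.powersetCard (Fintype.card α) Finset.univ))
      fun S _ hS => blockTerms_eq_zero P R (by simpa using hS),
      Finset.sum_congr rfl fun S hS => (blockTerms_eq_of_card P R
        (Finset.mem_powersetCard.1 hS).2).trans (blockTerms_isLeft P R)]
    simp
  have hc := Nat.add_choose_mul_factorial_mul_factorial (Fintype.card α) (Fintype.card β)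
  rw [← Nat.choose_symm_add] at hc
  simp only [pairPfaffian, h, Fintype.card_sum, ← hc]
  have := Nat.choose_pos (Nat.le_add_right (Fintype.card α) (Fintype.card β))
  push_cast
  field_simp
  ring

variable (κ) in
/-- The direct sum over `κ` of copies of `!![0, 1; -1, 0]`. -/
def standardForm : Matrix (κ × Fin 2) (κ × Fin 2) ℝ :=
  Matrix.kroneckerMap (· * ·) (1 : Matrix κ κ ℝ) !![0, 1; -1, 0]

theorem standardForm_transpose : (standardForm κ)ᵀ = -standardForm κ := by
  ext ⟨i, a⟩ ⟨j, b⟩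
  fin_cases a <;> fin_cases b <;> simp [standardForm, Matrix.one_apply, eq_comm]

theorem standardForm_mul_self : standardForm κ * standardForm κ = -1 := by
  rw [standardForm, ← Matrix.mul_kronecker_mul]
  ext ⟨i, a⟩ ⟨j, b⟩
  fin_cases a <;> fin_cases b <;> simp [Matrix.one_apply, Prod.ext_iff]

theorem standardForm_submatrix (e : κ ≃ μ) :
    (standardForm μ).submatrix (e.prodCongr (.refl _)) (e.prodCongr (.refl _)) =
      standardForm κ := by
  ext ⟨i, a⟩ ⟨j, b⟩
  simp [standardForm, Matrix.one_apply]

theorem pairBlockDiag_standardForm :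
    pairBlockDiag (standardForm α) (standardForm β) = standardForm (α ⊕ β) := by
  ext ⟨i | i, a⟩ ⟨j | j, b⟩ <;> simp [standardForm, Matrix.one_apply, pairBlockDiag]

theorem pairPfaffian_standardForm_fin_one : pairPfaffian (standardForm (Fin 1)) = 1 := by
  have h : ∀ σ : Perm (Fin 1 × Fin 2), (Perm.sign σ : ℤ) *
      (!![0, 1; -1, 0] : Matrix (Fin 2) (Fin 2) ℤ) (σ (0, 0)).2 (σ (0, 1)).2 = 1 := by
    decide
  have h' : ∀ a b : Fin 2, (!![0, 1; -1, 0] : Matrix (Fin 2) (Fin 2) ℝ) a b =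
      ((!![0, 1; -1, 0] : Matrix (Fin 2) (Fin 2) ℤ) a b : ℝ) := by
    intro a b
    fin_cases a <;> fin_cases b <;> simp
  have hsum : pfaffianSum (standardForm (Fin 1)) = 2 := by
    rw [pfaffianSum, Finset.sum_congr rfl (g := fun _ => (1 : ℝ)) fun σ _ => ?_]
    · simp [Fintype.card_perm]
    · rw [← Int.cast_one, ← h σ]
      simp [standardForm, h', Matrix.one_apply, Subsingleton.elim (σ (0, 0)).1 (σ (0, 1)).1]
  simp [pairPfaffian, hsum]

theorem pairPfaffian_standardForm_fin (n : ℕ) : pairPfaffian (standardForm (Fin n)) = 1 := by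
  induction n with
  | zero => simp [pairPfaffian, pfaffianSum]
  | succ n ih =>
    rw [← pairPfaffian_reindex finSumFinEquiv, standardForm_submatrix,
      ← pairBlockDiag_standardForm, pairPfaffian_pairBlockDiag, ih,
      pairPfaffian_standardForm_fin_one, one_mul]

theorem pairPfaffian_standardForm : pairPfaffian (standardForm κ) = 1 := by
  rw [← standardForm_submatrix (Fintype.equivFin κ), pairPfaffian_reindex,
    pairPfaffian_standardForm_fin]

theorem pairPfaffian_sum_congruence
    (G X : Matrix (α × Fin 2 ⊕ β × Fin 2) (α × Fin 2 ⊕ β × Fin 2) ℝ) :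
    pairPfaffian ((G * X * Gᵀ).submatrix (sumProdDistrib α β _) (sumProdDistrib α β _)) =
      G.det * pairPfaffian (X.submatrix (sumProdDistrib α β _) (sumProdDistrib α β _)) := by
  rw [← det_submatrix_equiv_self (sumProdDistrib α β (Fin 2)) G, ← pairPfaffian_congruence,
    transpose_submatrix, submatrix_mul_equiv, submatrix_mul_equiv]

theorem pairPfaffian_pairBlockDiag_inv {A : Matrix (κ × Fin 2) (κ × Fin 2) ℝ} (hA : Aᵀ = -A)
    (hu : IsUnit A.det) (E W : Matrix (κ × Fin 2) (β × Fin 2) ℝ) :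
    pairPfaffian (pairBlockDiag A (Eᵀ * A⁻¹ * E)) =
      pairPfaffian ((fromBlocks (A + W * Eᵀ - E * Wᵀ) (-E) Eᵀ 0).submatrix
        (sumProdDistrib κ β _) (sumProdDistrib κ β _)) := by
  have hAinv : A⁻¹ᵀ = -A⁻¹ := by
    rw [transpose_nonsing_inv, hA]
    exact inv_eq_left_inv (by rw [neg_mul_neg, nonsing_inv_mul A hu])
  have key : fromBlocks 1 W 0 1 * (fromBlocks 1 0 (Eᵀ * A⁻¹) 1 *
      fromBlocks A 0 0 (Eᵀ * A⁻¹ * E) * (fromBlocks 1 0 (Eᵀ * A⁻¹) 1)ᵀ) *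
      (fromBlocks 1 W 0 1)ᵀ = fromBlocks (A + W * Eᵀ - E * Wᵀ) (-E) Eᵀ 0 := by
    simp [fromBlocks_transpose, fromBlocks_multiply, hAinv, Matrix.mul_assoc,
      mul_nonsing_inv_cancel_left A _ hu, nonsing_inv_mul A hu, sub_eq_add_neg]
  rw [← key, pairPfaffian_sum_congruence, pairPfaffian_sum_congruence]
  simp [pairBlockDiag]

/-- The Pfaffian of the matrix pairing two copies of the same index set. -/
theorem pairPfaffian_fromBlocks_neg_one_one :
    pairPfaffian ((fromBlocks (0 : Matrix (β × Fin 2) (β × Fin 2) ℝ) (-1) 1 0).submatrix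
      (sumProdDistrib β β _) (sumProdDistrib β β _)) = (-1) ^ Fintype.card β := by
  have hinv : (standardForm β)⁻¹ = -standardForm β :=
    inv_eq_left_inv (by rw [neg_mul, standardForm_mul_self, neg_neg])
  have hu : IsUnit (standardForm β).det :=
    isUnit_det_of_left_inverse (B := -standardForm β)
      (by rw [neg_mul, standardForm_mul_self, neg_neg])
  have h := pairPfaffian_pairBlockDiag_inv standardForm_transpose hu 1
    ((-1 / 2 : ℝ) • standardForm β)
  rw [pairPfaffian_pairBlockDiag, transpose_one, one_mul, mul_one, one_mul, mul_one, hinv,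
    pairPfaffian_neg, pairPfaffian_standardForm, one_mul, mul_one, transpose_smul,
    standardForm_transpose] at h
  rw [h]
  congr 4
  module

/-- Jacobi's complementary minor identity for Pfaffians, in block form. -/
theorem pairPfaffian_mul_pairPfaffian_inv
    {A : Matrix ((α ⊕ β) × Fin 2) ((α ⊕ β) × Fin 2) ℝ} (hA : Aᵀ = -A) (hu : IsUnit A.det) :
    pairPfaffian A *
        pairPfaffian (A⁻¹.submatrix (Prod.map Sum.inr id) (Prod.map Sum.inr id) :
          Matrix (β × Fin 2) (β × Fin 2) ℝ) =
      (-1) ^ Fintype.card β *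
        pairPfaffian (A.submatrix (Prod.map Sum.inl id) (Prod.map Sum.inl id) :
          Matrix (α × Fin 2) (α × Fin 2) ℝ) := by
  let E : Matrix ((α ⊕ β) × Fin 2) (β × Fin 2) ℝ :=
    (1 : Matrix ((α ⊕ β) × Fin 2) ((α ⊕ β) × Fin 2) ℝ).submatrix id (Prod.map Sum.inr id)
  let W : Matrix ((α ⊕ β) × Fin 2) (β × Fin 2) ℝ := Matrix.of fun x y =>
    if x.1.isLeft then -A x (Prod.map Sum.inr id y) else -A x (Prod.map Sum.inr id y) / 2
  have hanti : ∀ x y, A x y = -A y x := fun x y => congrFun (congrFun hA y) x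
  have hE : Eᵀ * A⁻¹ * E = A⁻¹.submatrix (Prod.map Sum.inr id) (Prod.map Sum.inr id) := by
    ext x y
    simp [E, Matrix.mul_apply, Matrix.one_apply]
  have hEinl : ∀ i a y, E (Sum.inl i, a) y = 0 := by
    rintro i a ⟨j, b⟩
    simp [E]
  have hEinr : ∀ i a y, E (Sum.inr i, a) y = (1 : Matrix (β × Fin 2) (β × Fin 2) ℝ) (i, a) y := by
    rintro i a ⟨j, b⟩
    simp [E, Matrix.one_apply]
  have hinl : ∀ j b y, (E * Wᵀ) (Sum.inl j, b) y = 0 := by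
    intro j b y
    simp [Matrix.mul_apply, hEinl]
  have hinr : ∀ j b y, (E * Wᵀ) (Sum.inr j, b) y = W y (j, b) := by
    intro j b y
    simp [Matrix.mul_apply, hEinr, Matrix.one_apply]
  have hWl : ∀ i a j b, W (Sum.inl i, a) (j, b) = -A (Sum.inl i, a) (Sum.inr j, b) :=
    fun i a j b => by simp [W]
  have hWr : ∀ i a j b, W (Sum.inr i, a) (j, b) = -A (Sum.inr i, a) (Sum.inr j, b) / 2 :=
    fun i a j b => by simp [W]
  have hinlT : ∀ j b x, (W * Eᵀ) x (Sum.inl j, b) = 0 := by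
    intro j b x
    simp [Matrix.mul_apply, hEinl]
  have hinrT : ∀ j b x, (W * Eᵀ) x (Sum.inr j, b) = W x (j, b) := by
    intro j b x
    simp [Matrix.mul_apply, hEinr, Matrix.one_apply]
  have h := pairPfaffian_pairBlockDiag_inv hA hu E W
  rw [pairPfaffian_pairBlockDiag, hE] at h
  rw [h, ← pairPfaffian_fromBlocks_neg_one_one, mul_comm, ← pairPfaffian_pairBlockDiag,
    ← pairPfaffian_reindex (sumAssoc α β β)]
  congr 1
  ext ⟨(i | i) | i, a⟩ ⟨(j | j) | j, b⟩
  case inl.inr.inl.inl =>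
    simp [pairBlockDiag, hinr, hinlT, hWl, hanti (Sum.inr i, a)]
  case inl.inr.inl.inr =>
    simp [pairBlockDiag, hinr, hinrT, hWr]
    linarith [hanti (Sum.inr i, a) (Sum.inr j, b)]
  all_goals simp [pairBlockDiag, hinl, hinlT, hinrT, hWl, hEinl, hEinr, Matrix.one_apply, eq_comm]

end PairIndexed

/-- The interleaving equivalence `(i, b) ↦ 2 * i + b`. -/
def pairEquiv (n : ℕ) : Fin n × Fin 2 ≃ Fin (2 * n) :=
  finProdFinEquiv.trans (finCongr (mul_comm n 2))

theorem pfaffian_eq_pairPfaffian {n : ℕ} (A : Matrix (Fin (2 * n)) (Fin (2 * n)) ℝ) :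
    pfaffian A = pairPfaffian (A.submatrix (pairEquiv n) (pairEquiv n)) := by
  rw [pfaffian, pairPfaffian, pfaffianSum, Fintype.card_fin, one_div_mul_eq_div]
  congr 1
  refine Fintype.sum_equiv (pairEquiv n).symm.permCongr _ _ fun σ => ?_
  rw [Perm.sign_permCongr]
  congr 1
  refine Finset.prod_congr rfl fun i _ => ?_
  simp only [permCongr_apply, symm_symm, submatrix_apply, apply_symm_apply]
  have h0 : pairEquiv n (i, 0) = ⟨2 * i.val, by omega⟩ := Fin.ext (by simp [pairEquiv])
  have h1 : pairEquiv n (i, 1) = ⟨2 * i.val + 1, by omega⟩ :=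
    Fin.ext (by simp [pairEquiv, add_comm])
  rw [h0, h1]

theorem card_filter_lt_orderEmbOfFin {n c : ℕ} {L : Finset (Fin n)} (hL : L.card = c)
    (i : Fin c) : (L.filter (· < L.orderEmbOfFin hL i)).card = i := by
  rw [← Fin.card_Iio i, ← Finset.card_map (L.orderEmbOfFin hL).toEmbedding]
  congr 1
  ext x
  simp only [Finset.mem_filter, Finset.mem_map, Finset.mem_Iio]
  constructor
  · rintro ⟨hx, hlt⟩
    obtain ⟨y, rfl⟩ : x ∈ Set.range (L.orderEmbOfFin hL) := by simpa using hx
    exact ⟨y, by simpa using hlt, rfl⟩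
  · rintro ⟨y, hy, rfl⟩
    exact ⟨by simp, by simpa using hy⟩

theorem sum_card_filter_lt {n c : ℕ} {L : Finset (Fin n)} (hL : L.card = c) :
    ∑ j ∈ L, (L.filter (· < j)).card = ∑ i ∈ Finset.range c, i := by
  rw [Finset.sum_range, ← Finset.sum_coe_sort,
    ← (L.orderIsoOfFin hL).toEquiv.sum_comp fun j => (L.filter (· < (j : Fin n))).card]
  exact Finset.sum_congr rfl fun i _ => card_filter_lt_orderEmbOfFin hL i

/-- The sign of the shuffle listing first `L` and then its complement, each increasingly. -/
theorem sign_finSumEquivOfFinset {n c d : ℕ} {L : Finset (Fin n)} (hL : L.card = c)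
    (hLc : Lᶜ.card = d) (h : c + d = n) :
    Perm.sign ((finSumFinEquiv.trans (finCongr h)).symm.trans (finSumEquivOfFinset hL hLc)) =
      (-1) ^ (∑ ℓ ∈ L, (ℓ : ℕ) + ∑ i ∈ Finset.range c, i) := by
  rw [← Perm.sign_symm, Perm.sign_eq_prod_prod_Iio]
  set r := finSumEquivOfFinset hL hLc with hr
  have hlt : ∀ i j : Fin n, i < j →
      ((((finSumFinEquiv.trans (finCongr h)).symm.trans r).symm i <
        ((finSumFinEquiv.trans (finCongr h)).symm.trans r).symm j) ↔ ¬ (i ∉ L ∧ j ∈ L)) := by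
    intro i j hij
    obtain ⟨x, rfl⟩ := r.surjective i
    obtain ⟨y, rfl⟩ := r.surjective j
    have hc : ∀ z, L.orderEmbOfFin hL z ∈ L := Finset.orderEmbOfFin_mem L hL
    have hd : ∀ z, Lᶜ.orderEmbOfFin hLc z ∉ L := fun z =>
      Finset.mem_compl.1 (Finset.orderEmbOfFin_mem Lᶜ hLc z)
    have hρ : ∀ x, ((finSumFinEquiv.trans (finCongr h)).symm.trans r).symm (r x) =
        finCongr h (finSumFinEquiv x) := fun x => by simp
    rw [hρ, hρ]
    rcases x with x | x <;> rcases y with y | y <;>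
      simp only [hr, finSumEquivOfFinset_inl, finSumEquivOfFinset_inr,
        OrderEmbedding.lt_iff_lt, Fin.lt_def] at hij <;>
      simp only [hr, finSumEquivOfFinset_inl, finSumEquivOfFinset_inr, hc, hd, Fin.lt_def,
        finSumFinEquiv_apply_left, finSumFinEquiv_apply_right, finCongr_apply, Fin.val_cast,
        Fin.val_castAdd, Fin.val_natAdd, not_true_eq_false, not_false_eq_true, and_true,
        and_false, iff_true, iff_false] <;>
      omega
  have hprod : ∀ j, ∏ i ∈ Finset.Iio j,
      (if ((finSumFinEquiv.trans (finCongr h)).symm.trans r).symm i <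
        ((finSumFinEquiv.trans (finCongr h)).symm.trans r).symm j then (1 : ℤˣ) else -1) =
      if j ∈ L then (-1) ^ ((j : ℕ) + (L.filter (· < j)).card) else 1 := by
    intro j
    rw [Finset.prod_congr rfl fun i hi => if_congr (hlt i j (Finset.mem_Iio.1 hi)) rfl rfl]
    by_cases hj : j ∈ L
    · have hcard := Finset.card_filter_add_card_filter_not (s := Finset.Iio j) (· ∈ L)
      have : (Finset.Iio j).filter (· ∈ L) = L.filter (· < j) := by
        ext x
        simp [and_comm]
      rw [this, Fin.card_Iio] at hcard
      rw [← hcard]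
      simp [hj, Finset.prod_ite, pow_add, mul_right_comm, ← mul_pow]
    · simp [hj]
  rw [Finset.prod_congr rfl fun j _ => hprod j, Finset.prod_ite_mem, Finset.univ_inter,
    Finset.prod_pow_eq_pow_sum, Finset.sum_add_distrib, sum_card_filter_lt hL]

theorem neg_one_pow_sum_range_two_mul (k : ℕ) :
    (-1 : ℝ) ^ (∑ i ∈ Finset.range (2 * k), i) = (-1) ^ k := by
  induction k with
  | zero => simp
  | succ k ih =>
    rw [mul_add, mul_one, Finset.sum_range_succ, Finset.sum_range_succ, pow_add, pow_add, ih]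
    simp [pow_succ, pow_mul]

theorem stmt_11 {m k : ℕ} (A : Matrix (Fin (2 * m)) (Fin (2 * m)) ℝ)
    (hA : A.transpose = -A) (hInv : IsUnit A.det)
    (L : Finset (Fin (2 * m))) (hL : L.card = 2 * k)
    (hLc : Lᶜ.card = 2 * (m - k)) :
    (-1 : ℝ) ^ (∑ ℓ ∈ L, (ℓ.val + 1)) *
      pfaffian (n := m - k)
        (fun i j => A ((Lᶜ.orderIsoOfFin hLc i).1) ((Lᶜ.orderIsoOfFin hLc j).1)) =
    pfaffian A *
      pfaffian (n := k)
        (fun i j => A⁻¹ ((L.orderIsoOfFin hL i).1) ((L.orderIsoOfFin hL j).1)) := by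
  have hk : k + (m - k) = m := by
    have := L.card_add_card_compl
    rw [hL, hLc, Fintype.card_fin] at this
    omega
  have h2 : 2 * k + 2 * (m - k) = 2 * m := by omega
  let τ : Fin (m - k) ⊕ Fin k ≃ Fin m :=
    (sumComm _ _).trans (finSumFinEquiv.trans (finCongr hk))
  let e₀ : (Fin (m - k) ⊕ Fin k) × Fin 2 ≃ Fin (2 * m) :=
    (τ.prodCongr (.refl _)).trans (pairEquiv m)
  let π : Perm (Fin (2 * m)) :=
    (finSumFinEquiv.trans (finCongr h2)).symm.trans (finSumEquivOfFinset hL hLc)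
  let e := e₀.trans π
  have hinr : ∀ x, e (Prod.map Sum.inr id x) = L.orderEmbOfFin hL (pairEquiv k x) := by
    intro x
    rw [← finSumEquivOfFinset_inl hL hLc]
    refine congrArg (finSumEquivOfFinset hL hLc) ((symm_apply_eq _).2 (Fin.ext ?_))
    simp [e₀, τ, pairEquiv]
  have hinl : ∀ x, e (Prod.map Sum.inl id x) =
      Lᶜ.orderEmbOfFin hLc (pairEquiv (m - k) x) := by
    intro x
    rw [← finSumEquivOfFinset_inr hL hLc]
    refine congrArg (finSumEquivOfFinset hL hLc) ((symm_apply_eq _).2 (Fin.ext ?_))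
    simp [e₀, τ, pairEquiv]
    ring
  have hpf : pairPfaffian (A.submatrix e e) = Perm.sign π * pfaffian A := by
    rw [pfaffian_eq_pairPfaffian, ← pairPfaffian_reindex τ, ← Perm.sign_permCongr e₀.symm π,
      ← pairPfaffian_submatrix_perm]
    congr 1
    ext x y
    change A (π (e₀ x)) (π (e₀ y)) =
      A (e₀ (e₀.symm (π (e₀ x)))) (e₀ (e₀.symm (π (e₀ y))))
    rw [apply_symm_apply, apply_symm_apply]
  have hcore := pairPfaffian_mul_pairPfaffian_inv (A := A.submatrix e e)
    (by rw [transpose_submatrix, hA]; rfl) (by rwa [det_submatrix_equiv_self])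
  rw [inv_submatrix_equiv, submatrix_submatrix, submatrix_submatrix, hpf,
    sign_finSumEquivOfFinset hL hLc h2] at hcore
  have hR : pfaffian (n := k)
      (fun i j => A⁻¹ ((L.orderIsoOfFin hL i).1) ((L.orderIsoOfFin hL j).1)) =
      pairPfaffian (A⁻¹.submatrix (e ∘ Prod.map Sum.inr id) (e ∘ Prod.map Sum.inr id)) := by
    refine (pfaffian_eq_pairPfaffian _).trans (congrArg _ (Matrix.ext fun x y => ?_))
    change A⁻¹ (L.orderEmbOfFin hL (pairEquiv k x))
      (L.orderEmbOfFin hL (pairEquiv k y)) =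
      A⁻¹ (e (Prod.map Sum.inr id x)) (e (Prod.map Sum.inr id y))
    rw [hinr, hinr]
  have hP : pfaffian (n := m - k)
      (fun i j => A ((Lᶜ.orderIsoOfFin hLc i).1) ((Lᶜ.orderIsoOfFin hLc j).1)) =
      pairPfaffian (A.submatrix (e ∘ Prod.map Sum.inl id) (e ∘ Prod.map Sum.inl id)) := by
    refine (pfaffian_eq_pairPfaffian _).trans (congrArg _ (Matrix.ext fun x y => ?_))
    change A (Lᶜ.orderEmbOfFin hLc (pairEquiv (m - k) x))
      (Lᶜ.orderEmbOfFin hLc (pairEquiv (m - k) y)) =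
      A (e (Prod.map Sum.inl id x)) (e (Prod.map Sum.inl id y))
    rw [hinl, hinl]
  refine (congrArg _ hP).trans (Eq.trans ?_ (congrArg _ hR).symm)
  rw [Fintype.card_fin] at hcore
  push_cast at hcore
  rw [pow_add, neg_one_pow_sum_range_two_mul] at hcore
  have hsq : ∀ n : ℕ, (-1 : ℝ) ^ n * (-1) ^ n = 1 := fun n => by rw [← mul_pow]; simp
  have hS : (-1 : ℝ) ^ (∑ ℓ ∈ L, (ℓ.val + 1)) = (-1) ^ (∑ ℓ ∈ L, ℓ.val) := by
    rw [Finset.sum_add_distrib, Finset.sum_const, hL, pow_add]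
    simp
  rw [hS]
  generalize pairPfaffian (A⁻¹.submatrix (e ∘ Prod.map Sum.inr id) (e ∘ Prod.map Sum.inr id)) = X
    at hcore ⊢
  generalize pairPfaffian (A.submatrix (e ∘ Prod.map Sum.inl id) (e ∘ Prod.map Sum.inl id)) = Y
    at hcore ⊢
  linear_combination (-(-1 : ℝ) ^ (∑ ℓ ∈ L, ℓ.val) * (-1) ^ k) * hcore +
    (pfaffian A * X - (-1) ^ (∑ ℓ ∈ L, ℓ.val) * Y) * hsq k +
    pfaffian A * X * (-1) ^ k * (-1) ^ k * hsq (∑ ℓ ∈ L, ℓ.val)
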